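/- Let w be a positive even integer and let n be an odd integer with 0 < n < w. Then E_{w,n} is an even weighted Dedekind symbol of weight w: E_{w,n}(h,k+h)=E_{w,n}(h,k) and E_{w,n}(ch,ck)=c^w·E_{w,n}(h,k) for all (h,k) ∈ ℤ⁺×ℤ and c ∈ ℤ⁺, and E_{w,n}(h,−k)=E_{w,n}(h,k) for all (h,k) ∈ ℤ⁺×ℤ. Moreover E_{w,n} satisfies the reciprocity law E_{w,n}(h,k) − E_{w,n}(k,−h) = S_{w,n}(h,k) for all h,k ∈ ℤ⁺. -/

import Mathlib

open scoped Classical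

/-- The `m`-th Bernoulli function `B̄_m(x) = B_m(x − ⌊x⌋)` (ℂ-valued, rational argument). -/
noncomputable def Bbar (m : ℕ) (x : ℚ) : ℂ :=
  ((Polynomial.bernoulli m).eval (x - ⌊x⌋) : ℚ)

/-- The `m`-th Bernoulli polynomial evaluated at a complex number. -/
noncomputable def Bpoly (m : ℕ) (x : ℂ) : ℂ :=
  Polynomial.aeval x (Polynomial.bernoulli m)

/-- The `m`-th Bernoulli number `B_m = B_m(0)`. -/
noncomputable def Bnum (m : ℕ) : ℂ := ((bernoulli m : ℚ) : ℂ)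

/-- The finite sum `I_{w,n}(h,k) = (1/2)·∑ sgn(k/h+b/a)·(ak+bh)^{w-n}·(ck+dh)^n`,
over quadruples `(a,b,c,d) ∈ ℤ⁴` with `ad−bc = 1`, `a ≠ 0`, `c ≠ 0`,
`|b+⌊k/h+1/2⌋a| ≤ |a| ≤ h`, `|d+⌊k/h+1/2⌋c| ≤ |c| ≤ h` and `(k/h+b/a)(k/h+d/c) < 0`;
the factor `1/2` accounts for the quotient of `SL(2,ℤ)` by `±1`. -/
noncomputable def Iwn (w n : ℕ) (h k : ℤ) : ℂ :=
  (1 / 2) * ∑ᶠ p : ℤ × ℤ × ℤ × ℤ,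
    if p.1 * p.2.2.2 - p.2.1 * p.2.2.1 = 1 ∧ p.1 ≠ 0 ∧ p.2.2.1 ≠ 0 ∧
        |p.2.1 + ⌊(k : ℚ) / h + 1 / 2⌋ * p.1| ≤ |p.1| ∧ |p.1| ≤ h ∧
        |p.2.2.2 + ⌊(k : ℚ) / h + 1 / 2⌋ * p.2.2.1| ≤ |p.2.2.1| ∧ |p.2.2.1| ≤ h ∧
        ((k : ℚ) / h + p.2.1 / p.1) * ((k : ℚ) / h + p.2.2.2 / p.2.2.1) < 0 then
      (Real.sign ((k : ℝ) / h + (p.2.1 : ℝ) / p.1) : ℂ) *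
        ((p.1 * k + p.2.1 * h : ℤ) : ℂ) ^ (w - n) * ((p.2.2.1 * k + p.2.2.2 * h : ℤ) : ℂ) ^ n
    else 0

/-- `E_{w,n}` for odd `n`. -/
noncomputable def EwnOdd (w n : ℕ) (h k : ℤ) : ℂ :=
  Iwn w n h k - Bbar (n + 1) ((k : ℚ) / h) / ((n : ℂ) + 1) * (h : ℂ) ^ w
    - Bbar (w - n + 1) ((k : ℚ) / h) / (((w - n : ℕ) : ℂ) + 1) * (h : ℂ) ^ w
    + ((w : ℂ) + 2) / Bnum (w + 2) * (Bnum (n + 1) / ((n : ℂ) + 1))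
      * (Bnum (w - n + 1) / (((w - n : ℕ) : ℂ) + 1)) * (h : ℂ) ^ w

/-- `S_{w,n}` for odd `n`. -/
noncomputable def SwnOdd (w n : ℕ) (h k : ℤ) : ℂ :=
  -(Bpoly (n + 1) ((k : ℂ) / h) / ((n : ℂ) + 1)) * (h : ℂ) ^ w
    + Bpoly (n + 1) ((h : ℂ) / k) / ((n : ℂ) + 1) * (k : ℂ) ^ w
    - Bpoly (w - n + 1) ((k : ℂ) / h) / (((w - n : ℕ) : ℂ) + 1) * (h : ℂ) ^ w
    + Bpoly (w - n + 1) ((h : ℂ) / k) / (((w - n : ℕ) : ℂ) + 1) * (k : ℂ) ^ w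
    + ((w : ℂ) + 2) / Bnum (w + 2) * (Bnum (n + 1) / ((n : ℂ) + 1))
      * (Bnum (w - n + 1) / (((w - n : ℕ) : ℂ) + 1)) * ((h : ℂ) ^ w - (k : ℂ) ^ w)

/-!
Put `u = a * k + b * h` and `v = c * k + d * h`. Since `a * v - c * u = h`, the condition
`(k / h + b / a) * (k / h + d / c) < 0` means `c * u < 0 < a * v`, whence
`|a| * |v| + |c| * |u| = h` and all the bounds in the definition of `Iwn` are automatic. So
`2 * Iwn` is the sum of the sign-twisted monomial `sgn (u * v) * u ^ (w - n) * v ^ n`, even in `u`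
and in `v`, over all `(a, b; c, d)` of determinant one with `c * u < 0 < a * v`.

Translation, scaling and negation of `k` act on these matrices. For reciprocity,
`(a, b; c, d) ↦ (b, a; -d, -c)` exchanges the roles of `h` and `k` and sends `(u, v)` to `(u, -v)`,
but it respects the sign conditions only if `b ≠ 0` and `d ≠ 0`. The exceptional matrices
have `{|u|, |v|} = {k, h - x * k}` with `0 < x` and `x * k < h`, and the sum of `(h - x * k) ^ m`
over such `x` is, up to normalization, the jump of the Bernoulli polynomial `B_{m+1}` to its
periodization at `h / k`.
-/

theorem mul_neg_iff_of_lt {R : Type*} [Ring R] [LinearOrder R] [IsStrictOrderedRing R] {x y : R}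
    (h : y < x) : x * y < 0 ↔ 0 < x ∧ y < 0 := by
  rw [mul_neg_iff, or_iff_left fun hxy ↦ (hxy.1.trans hxy.2).not_gt h]

section FareyEnclosures

variable {a b c d h k : ℤ}

/-- The matrices `(a, b; c, d)` of determinant one, encoded as quadruples, for which `k / h` lies
strictly between `-b / a` and `-d / c` when `h > 0`. In terms of `u = a * k + b * h` and
`v = c * k + d * h`, this says that `a * v` and `c * u`, whose difference is `h`, have opposite
signs. The set is empty when `h ≤ 0`. -/
def fareyEnclosures (h k : ℤ) : Set (ℤ × ℤ × ℤ × ℤ) :=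
  {(a, b, c, d) | a * d - b * c = 1 ∧ 0 < a * (c * k + d * h) ∧ c * (a * k + b * h) < 0}

/-- The finite sum of `f u v` over the Farey enclosures of `k / h`, where `u = a * k + b * h` and
`v = c * k + d * h`. -/
noncomputable def fareySum {M : Type*} [AddCommMonoid M] (f : ℤ → ℤ → M) (h k : ℤ) : M :=
  ∑ᶠ p ∈ fareyEnclosures h k, f (p.1 * k + p.2.1 * h) (p.2.2.1 * k + p.2.2.2 * h)

theorem mem_fareyEnclosures : (a, b, c, d) ∈ fareyEnclosures h k ↔
    a * d - b * c = 1 ∧ 0 < a * (c * k + d * h) ∧ c * (a * k + b * h) < 0 :=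
  Iff.rfl

theorem mem_fareyEnclosures_iff_mul_neg (hh : 0 < h) :
    (a, b, c, d) ∈ fareyEnclosures h k ↔
      a * d - b * c = 1 ∧ (a * (c * k + d * h)) * (c * (a * k + b * h)) < 0 := by
  refine and_congr_right fun hdet ↦ (mul_neg_iff_of_lt ?_).symm
  linear_combination hh - h * hdet

theorem pos_of_mem_fareyEnclosures (hp : (a, b, c, d) ∈ fareyEnclosures h k) : 0 < h := by
  obtain ⟨hdet, hav, hcu⟩ := hp
  linear_combination hav + hcu + h * hdet

theorem abs_le_of_mem_fareyEnclosures (hp : (a, b, c, d) ∈ fareyEnclosures h k) :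
    |a| ≤ h ∧ |c| ≤ h ∧ |a * k + b * h| ≤ h ∧ |c * k + d * h| ≤ h := by
  obtain ⟨hdet, hav, hcu⟩ := hp
  set u := a * k + b * h with hu
  set v := c * k + d * h with hv
  have hsum : |a| * |v| + |c| * |u| = h := by
    rw [← abs_mul, ← abs_mul, abs_of_pos hav, abs_of_neg hcu, hu, hv]
    linear_combination h * hdet
  have ha : 0 < |a| := abs_pos.2 (left_ne_zero_of_mul hav.ne')
  have hv : 0 < |v| := abs_pos.2 (right_ne_zero_of_mul hav.ne')
  have hc : 0 < |c| := abs_pos.2 (left_ne_zero_of_mul hcu.ne)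
  have hu : 0 < |u| := abs_pos.2 (right_ne_zero_of_mul hcu.ne)
  refine ⟨?_, ?_, ?_, ?_⟩ <;> nlinarith

theorem fareyEnclosures_finite (h k : ℤ) : (fareyEnclosures h k).Finite := by
  let box : Set ℤ := Set.Icc (-h) h
  have hbox : (box ×ˢ box ×ˢ box ×ˢ box).Finite := by
    have := Set.finite_Icc (-h) h
    exact this.prod (this.prod (this.prod this))
  refine Set.Finite.of_injOn
    (f := fun p ↦ (p.1, p.2.2.1, p.1 * k + p.2.1 * h, p.2.2.1 * k + p.2.2.2 * h)) ?_ ?_ hbox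
  · rintro ⟨a, b, c, d⟩ hp
    simpa only [box, Set.mem_prod, Set.mem_Icc, ← abs_le] using abs_le_of_mem_fareyEnclosures hp
  · rintro ⟨a, b, c, d⟩ hp ⟨a', b', c', d'⟩ - heq
    have hh : h ≠ 0 := (pos_of_mem_fareyEnclosures hp).ne'
    simp only [Prod.mk.injEq] at heq ⊢
    obtain ⟨rfl, rfl, hb, hd⟩ := heq
    exact ⟨rfl, mul_right_cancel₀ hh (add_left_cancel hb), rfl,
      mul_right_cancel₀ hh (add_left_cancel hd)⟩

variable {M : Type*}

theorem fareySum_add_self [AddCommMonoid M] (f : ℤ → ℤ → M) (h k : ℤ) :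
    fareySum f h (k + h) = fareySum f h k := by
  let e : ℤ × ℤ × ℤ × ℤ ≃ ℤ × ℤ × ℤ × ℤ :=
    { toFun := fun p ↦ (p.1, p.1 + p.2.1, p.2.2.1, p.2.2.1 + p.2.2.2)
      invFun := fun p ↦ (p.1, -p.1 + p.2.1, p.2.2.1, -p.2.2.1 + p.2.2.2)
      left_inv := fun p ↦ by simp
      right_inv := fun p ↦ by simp }
  refine finsum_mem_eq_of_bijOn e (e.bijOn ?_) ?_ <;> rintro ⟨a, b, c, d⟩
  · simp only [e, Equiv.coe_fn_mk, mem_fareyEnclosures]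
    ring_nf
  · intro _
    simp only [e, Equiv.coe_fn_mk]
    ring_nf

theorem fareySum_mul_mul [AddCommMonoid M] (f : ℤ → ℤ → M) {t : ℤ} (ht : 0 < t) (h k : ℤ) :
    fareySum f (t * h) (t * k) = fareySum (fun x y ↦ f (t * x) (t * y)) h k := by
  have hform (x y : ℤ) : x * (t * k) + y * (t * h) = t * (x * k + y * h) := by ring
  have hset : fareyEnclosures (t * h) (t * k) = fareyEnclosures h k := by
    ext ⟨a, b, c, d⟩
    rw [mem_fareyEnclosures, mem_fareyEnclosures, hform, hform, mul_left_comm a,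
      mul_left_comm c, mul_pos_iff_of_pos_left ht, ← neg_pos, ← mul_neg,
      mul_pos_iff_of_pos_left ht, neg_pos]
  simp only [fareySum, hset, hform]

theorem fareySum_neg [AddCommMonoid M] {f : ℤ → ℤ → M} (hf : ∀ x y, f (-x) y = f x y) (h k : ℤ) :
    fareySum f h (-k) = fareySum f h k := by
  have hinv : Function.Involutive fun p : ℤ × ℤ × ℤ × ℤ ↦ (p.1, -p.2.1, -p.2.2.1, p.2.2.2) :=
    fun p ↦ by simp
  refine finsum_mem_eq_of_bijOn _ (hinv.toPerm.bijOn ?_) ?_ <;> rintro ⟨a, b, c, d⟩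
  · simp only [Function.Involutive.coe_toPerm, mem_fareyEnclosures]
    ring_nf
  · intro _
    simp only [Function.Involutive.coe_toPerm]
    rw [← hf]
    ring_nf

variable {f : ℤ → ℤ → M}

theorem swap_mem_fareyEnclosures (hk : 0 < k) (hp : (a, b, c, d) ∈ fareyEnclosures h k)
    (hb : b ≠ 0) (hd : d ≠ 0) : (b, a, -d, -c) ∈ fareyEnclosures k h := by
  obtain ⟨hdet, hneg⟩ := (mem_fareyEnclosures_iff_mul_neg (pos_of_mem_fareyEnclosures hp)).1 hp
  have had : a * d ≠ 0 := mul_ne_zero (by rintro rfl; simp at hneg) hd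
  have hbc : b * c ≠ 0 := mul_ne_zero hb (by rintro rfl; simp at hneg)
  -- Consecutive nonzero integers have the same sign.
  have habcd : 0 < (a * d) * (b * c) := by
    rw [mul_pos_iff]
    omega
  refine (mem_fareyEnclosures_iff_mul_neg hk).2 ⟨by linear_combination hdet, ?_⟩
  refine neg_of_mul_neg_right ?_ (sq_nonneg (a * c))
  linear_combination mul_neg_of_pos_of_neg habcd hneg

theorem finsum_mem_fareyEnclosures_ne_zero_swap [AddCommMonoid M]
    (hf : ∀ x y, f x (-y) = f x y) (hh : 0 < h) (hk : 0 < k) :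
    ∑ᶠ p ∈ {p ∈ fareyEnclosures h k | p.2.1 ≠ 0 ∧ p.2.2.2 ≠ 0},
        f (p.1 * k + p.2.1 * h) (p.2.2.1 * k + p.2.2.2 * h) =
      ∑ᶠ p ∈ {p ∈ fareyEnclosures k h | p.2.1 ≠ 0 ∧ p.2.2.2 ≠ 0},
        f (p.1 * h + p.2.1 * k) (p.2.2.1 * h + p.2.2.2 * k) := by
  have hmaps {h k : ℤ} (hk : 0 < k) :
      Set.MapsTo (fun p : ℤ × ℤ × ℤ × ℤ ↦ (p.2.1, p.1, -p.2.2.2, -p.2.2.1))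
        {p ∈ fareyEnclosures h k | p.2.1 ≠ 0 ∧ p.2.2.2 ≠ 0}
        {p ∈ fareyEnclosures k h | p.2.1 ≠ 0 ∧ p.2.2.2 ≠ 0} := by
    rintro ⟨a, b, c, d⟩ ⟨hp, hb, hd⟩
    exact ⟨swap_mem_fareyEnclosures hk hp hb hd, left_ne_zero_of_mul hp.2.1.ne',
      neg_ne_zero.2 (left_ne_zero_of_mul hp.2.2.ne)⟩
  refine finsum_mem_eq_of_bijOn _
    (Set.InvOn.bijOn ⟨?_, ?_⟩ (hmaps hk) (hmaps hh)) ?_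
  · rintro ⟨a, b, c, d⟩ -
    simp
  · rintro ⟨a, b, c, d⟩ -
    simp
  · rintro ⟨a, b, c, d⟩ -
    rw [← hf]
    ring_nf

theorem bijOn_fareyEnclosures_snd_eq_zero (hk : 0 < k) :
    Set.BijOn (fun p : ℤˣ × ℤ ↦ ((p.1 : ℤ), (0 : ℤ), -(p.1 * p.2 : ℤ), (p.1 : ℤ)))
      (Set.univ ×ˢ {x | 0 < x ∧ x * k < h}) {p ∈ fareyEnclosures h k | p.2.1 = 0} := by
  refine ⟨?_, ?_, ?_⟩
  · rintro ⟨e, x⟩ ⟨-, hx, hxk⟩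
    have he : (e : ℤ) * e = 1 := Int.isUnit_mul_self e.isUnit
    refine ⟨⟨?_, ?_, ?_⟩, rfl⟩
    · linear_combination he
    · linear_combination hxk + (x * k - h) * he
    · linear_combination mul_pos hx hk + (-x * k) * he
  · rintro ⟨e, x⟩ - ⟨e', x'⟩ - heq
    simp only [Prod.mk.injEq, neg_inj, Units.val_inj, true_and] at heq ⊢
    obtain ⟨hx, rfl⟩ := heq.2
    exact ⟨rfl, mul_left_cancel₀ e.ne_zero hx⟩
  · rintro ⟨a, b, c, d⟩ ⟨⟨hdet, hav, hcu⟩, rfl : b = 0⟩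
    rw [zero_mul, sub_zero] at hdet
    obtain ⟨e, rfl⟩ : IsUnit a := .of_mul_eq_one d hdet
    obtain rfl : (e : ℤ) = d := mul_left_cancel₀ e.ne_zero
      ((Int.isUnit_mul_self e.isUnit).trans hdet.symm)
    refine ⟨(e, -(e * c)), ⟨Set.mem_univ e, ?_, ?_⟩, ?_⟩
    · refine pos_of_mul_pos_left (b := k) ?_ hk.le
      linear_combination hcu
    · linear_combination hav + h * hdet
    · simp only [mul_neg, neg_neg, ← mul_assoc, hdet, one_mul]

theorem finsum_mem_fareyEnclosures_snd_eq_zero [AddCommMonoid M]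
    (hf : ∀ x y, f (-x) y = f x y) (hf' : ∀ x y, f x (-y) = f x y)
    (hf₀ : ∀ x, f x 0 = 0) (hk : 0 < k) :
    ∑ᶠ p ∈ {p ∈ fareyEnclosures h k | p.2.1 = 0},
        f (p.1 * k + p.2.1 * h) (p.2.2.1 * k + p.2.2.2 * h) =
      2 • ∑ x ∈ Finset.Ioc 0 (h / k), f k (h - x * k) := by
  let s : Finset ℤ := {x ∈ Finset.Ioc 0 (h / k) | x * k ≠ h}
  have hs {x : ℤ} : x ∈ s ↔ 0 < x ∧ x * k < h := by
    rw [Finset.mem_filter, Finset.mem_Ioc, Int.le_ediv_iff_mul_le hk, and_assoc,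
      ← lt_iff_le_and_ne]
  have hcoe : (↑((Finset.univ : Finset ℤˣ) ×ˢ s) : Set (ℤˣ × ℤ)) =
      Set.univ ×ˢ {x | 0 < x ∧ x * k < h} := by
    rw [Finset.coe_product, Finset.coe_univ]
    exact congrArg _ (Set.ext fun _ ↦ hs)
  have hval (e : ℤˣ) (x : ℤ) :
      f (e * k + 0 * h) (-(e * x) * k + e * h) = f k (h - x * k) := by
    obtain rfl | rfl := Int.units_eq_one_or e
    · simp [neg_add_eq_sub]
    · rw [← hf, ← hf']
      simp [sub_eq_add_neg]
  calc
    _ = ∑ p ∈ (Finset.univ : Finset ℤˣ) ×ˢ s, f k (h - p.2 * k) := by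
      rw [← finsum_mem_coe_finset, hcoe]
      exact (finsum_mem_eq_of_bijOn _ (bijOn_fareyEnclosures_snd_eq_zero hk)
        fun p _ ↦ (hval p.1 p.2).symm).symm
    _ = 2 • ∑ x ∈ s, f k (h - x * k) := by
      simp only [Finset.sum_product, Finset.sum_const, Finset.card_univ, Fintype.card_units_int]
    _ = _ := by
      congr 1
      refine Finset.sum_filter_of_ne fun x _ hx hxk ↦ hx ?_
      rw [hxk, sub_self, hf₀]

theorem rotate_mem_fareyEnclosures :
    (c, d, -a, -b) ∈ fareyEnclosures h k ↔ (a, b, c, d) ∈ fareyEnclosures h k := by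
  rw [mem_fareyEnclosures, mem_fareyEnclosures, and_comm (a := 0 < c * _)]
  refine and_congr (Eq.congr_left (by ring)) (and_congr ?_ ?_)
  · rw [← neg_pos]
    ring_nf
  · rw [← neg_pos]
    ring_nf

theorem finsum_mem_fareyEnclosures_fourth_eq_zero [AddCommMonoid M]
    (hf : ∀ x y, f (-x) y = f x y) :
    ∑ᶠ p ∈ {p ∈ fareyEnclosures h k | p.2.2.2 = 0},
        f (p.1 * k + p.2.1 * h) (p.2.2.1 * k + p.2.2.2 * h) =
      ∑ᶠ p ∈ {p ∈ fareyEnclosures h k | p.2.1 = 0},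
        f (p.2.2.1 * k + p.2.2.2 * h) (p.1 * k + p.2.1 * h) := by
  let e : ℤ × ℤ × ℤ × ℤ ≃ ℤ × ℤ × ℤ × ℤ :=
    { toFun := fun p ↦ (p.2.2.1, p.2.2.2, -p.1, -p.2.1)
      invFun := fun p ↦ (-p.2.2.1, -p.2.2.2, p.1, p.2.1)
      left_inv := fun p ↦ by simp
      right_inv := fun p ↦ by simp }
  refine finsum_mem_eq_of_bijOn e (e.bijOn fun p ↦ ?_) fun p _ ↦ ?_
  · exact and_congr_left fun _ ↦ rotate_mem_fareyEnclosures
  · simp only [e, Equiv.coe_fn_mk, neg_mul, ← neg_add, hf]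

theorem fareySum_eq_finsum_mem_ne_zero_add [AddCommMonoid M]
    (hf : ∀ x y, f (-x) y = f x y) (hf' : ∀ x y, f x (-y) = f x y)
    (hf₀ : ∀ x, f x 0 = 0) (hf₀' : ∀ y, f 0 y = 0) (hk : 0 < k) :
    fareySum f h k =
      ∑ᶠ p ∈ {p ∈ fareyEnclosures h k | p.2.1 ≠ 0 ∧ p.2.2.2 ≠ 0},
          f (p.1 * k + p.2.1 * h) (p.2.2.1 * k + p.2.2.2 * h) +
        2 • ∑ x ∈ Finset.Ioc 0 (h / k), (f k (h - x * k) + f (h - x * k) k) := by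
  have hsplit : fareyEnclosures h k = {p ∈ fareyEnclosures h k | p.2.1 ≠ 0 ∧ p.2.2.2 ≠ 0} ∪
      ({p ∈ fareyEnclosures h k | p.2.1 = 0} ∪ {p ∈ fareyEnclosures h k | p.2.2.2 = 0}) := by
    rw [← Set.sep_or, ← Set.sep_or, eq_comm, Set.sep_eq_self_iff_mem_true]
    grind
  have hfin (q : ℤ × ℤ × ℤ × ℤ → Prop) : {p ∈ fareyEnclosures h k | q p}.Finite :=
    (fareyEnclosures_finite h k).sep q
  have hdisj : Disjoint {p ∈ fareyEnclosures h k | p.2.1 ≠ 0 ∧ p.2.2.2 ≠ 0}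
      ({p ∈ fareyEnclosures h k | p.2.1 = 0} ∪ {p ∈ fareyEnclosures h k | p.2.2.2 = 0}) := by
    rw [Set.disjoint_left]
    rintro p ⟨-, hb, hd⟩ (hp | hp)
    exacts [hb hp.2, hd hp.2]
  have hdisj' : Disjoint {p ∈ fareyEnclosures h k | p.2.1 = 0}
      {p ∈ fareyEnclosures h k | p.2.2.2 = 0} := by
    rw [Set.disjoint_left]
    rintro ⟨a, b, c, d⟩ ⟨hp, rfl : b = 0⟩ ⟨-, rfl : d = 0⟩
    simpa using hp.1
  conv_lhs => rw [fareySum, hsplit]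
  rw [finsum_mem_union hdisj (hfin _) ((hfin _).union (hfin _)),
    finsum_mem_union hdisj' (hfin _) (hfin _), finsum_mem_fareyEnclosures_fourth_eq_zero hf,
    finsum_mem_fareyEnclosures_snd_eq_zero hf hf' hf₀ hk,
    finsum_mem_fareyEnclosures_snd_eq_zero (f := fun x y ↦ f y x)
      (fun x y ↦ hf' y x) (fun x y ↦ hf y x) hf₀' hk, ← smul_add, ← Finset.sum_add_distrib]

theorem fareySum_sub_fareySum_swap [AddCommGroup M]
    (hf : ∀ x y, f (-x) y = f x y) (hf' : ∀ x y, f x (-y) = f x y)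
    (hf₀ : ∀ x, f x 0 = 0) (hf₀' : ∀ y, f 0 y = 0) (hh : 0 < h) (hk : 0 < k) :
    fareySum f h k - fareySum f k h =
      2 • ∑ x ∈ Finset.Ioc 0 (h / k), (f k (h - x * k) + f (h - x * k) k) -
        2 • ∑ x ∈ Finset.Ioc 0 (k / h), (f h (k - x * h) + f (k - x * h) h) := by
  rw [fareySum_eq_finsum_mem_ne_zero_add hf hf' hf₀ hf₀' hk,
    fareySum_eq_finsum_mem_ne_zero_add hf hf' hf₀ hf₀' hh,
    finsum_mem_fareyEnclosures_ne_zero_swap hf' hh hk, add_sub_add_left_eq_sub]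

end FareyEnclosures

section SignedMonomial

variable {m n : ℕ} {x y : ℤ}

/-- The monomial `x ^ m * y ^ n` twisted by the sign of `x * y`, which makes it even in each
variable of odd exponent. It is the weight of `Iwn`. -/
noncomputable def signedMonomial (m n : ℕ) (x y : ℤ) : ℂ :=
  ((x * y).sign : ℂ) * (x : ℂ) ^ m * (y : ℂ) ^ n

@[simp]
theorem signedMonomial_zero_left : signedMonomial m n 0 y = 0 := by
  simp [signedMonomial]

@[simp]
theorem signedMonomial_zero_right : signedMonomial m n x 0 = 0 := by
  simp [signedMonomial]

theorem signedMonomial_neg_left (hm : Odd m) (x y : ℤ) :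
    signedMonomial m n (-x) y = signedMonomial m n x y := by
  simp [signedMonomial, hm.neg_pow]

theorem signedMonomial_neg_right (hn : Odd n) (x y : ℤ) :
    signedMonomial m n x (-y) = signedMonomial m n x y := by
  simp [signedMonomial, hn.neg_pow]

theorem signedMonomial_of_nonneg (hm : m ≠ 0) (hn : n ≠ 0) (hx : 0 ≤ x) (hy : 0 ≤ y) :
    signedMonomial m n x y = (x : ℂ) ^ m * (y : ℂ) ^ n := by
  obtain rfl | hx := hx.eq_or_lt
  · simp [hm]
  obtain rfl | hy := hy.eq_or_lt
  · simp [hn]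
  rw [signedMonomial, Int.sign_eq_one_of_pos (mul_pos hx hy), Int.cast_one, one_mul]

theorem signedMonomial_mul_mul {t : ℤ} (ht : 0 < t) (x y : ℤ) :
    signedMonomial m n (t * x) (t * y) = (t : ℂ) ^ (m + n) * signedMonomial m n x y := by
  simp only [signedMonomial, Int.sign_mul, Int.sign_eq_one_of_pos ht]
  push_cast
  ring

end SignedMonomial

section Iwn

variable {a b c d h k : ℤ} {w n : ℕ}

theorem abs_add_floor_mul_le (hh : 0 < h) (ha : a ≠ 0) (hu : |a * k + b * h| ≤ h) :
    |b + ⌊(k : ℚ) / h + 1 / 2⌋ * a| ≤ |a| := by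
  have hh' : (0 : ℚ) < h := Int.cast_pos.2 hh
  have ha' : (0 : ℚ) < |(a : ℚ)| := abs_pos.2 (Int.cast_ne_zero.2 ha)
  rw [← round_eq, ← Int.lt_add_one_iff, ← Int.cast_lt (R := ℚ)]
  push_cast
  calc |(b : ℚ) + round ((k : ℚ) / h) * a|
      = |((a * k + b * h : ℤ) : ℚ) / h - a * ((k : ℚ) / h - round ((k : ℚ) / h))| := by
        congr 1
        push_cast
        field_simp
        ring
    _ ≤ |((a * k + b * h : ℤ) : ℚ) / h| + |(a : ℚ)| * |(k : ℚ) / h - round ((k : ℚ) / h)| := by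
        rw [← abs_mul]
        exact abs_sub _ _
    _ ≤ 1 + |(a : ℚ)| * (1 / 2) := by
        gcongr
        · rw [abs_div, abs_of_pos hh', div_le_one hh']
          exact_mod_cast hu
        · exact abs_sub_round _
    _ < |(a : ℚ)| + 1 := by linarith

theorem div_add_div_mul_neg_iff (hh : h ≠ 0) (ha : a ≠ 0) (hc : c ≠ 0) :
    ((k : ℚ) / h + b / a) * ((k : ℚ) / h + d / c) < 0 ↔
      (a * (c * k + d * h)) * (c * (a * k + b * h)) < 0 := by
  have hpos : (0 : ℚ) < (h * a * c) ^ 2 := by positivity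
  have hmul : ((k : ℚ) / h + b / a) * ((k : ℚ) / h + d / c) * (h * a * c) ^ 2 =
      ((a * (c * k + d * h)) * (c * (a * k + b * h)) : ℤ) := by
    push_cast
    field_simp
  rw [← neg_pos, ← mul_pos_iff_of_pos_right hpos, neg_mul, hmul, neg_pos, Int.cast_lt_zero]

theorem mem_fareyEnclosures_iff (hh : 0 < h) : (a, b, c, d) ∈ fareyEnclosures h k ↔
    a * d - b * c = 1 ∧ a ≠ 0 ∧ c ≠ 0 ∧
      |b + ⌊(k : ℚ) / h + 1 / 2⌋ * a| ≤ |a| ∧ |a| ≤ h ∧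
      |d + ⌊(k : ℚ) / h + 1 / 2⌋ * c| ≤ |c| ∧ |c| ≤ h ∧
      ((k : ℚ) / h + b / a) * ((k : ℚ) / h + d / c) < 0 := by
  constructor
  · intro hp
    have ha₀ : a ≠ 0 := left_ne_zero_of_mul hp.2.1.ne'
    have hc₀ : c ≠ 0 := left_ne_zero_of_mul hp.2.2.ne
    obtain ⟨hdet, hneg⟩ := (mem_fareyEnclosures_iff_mul_neg hh).1 hp
    obtain ⟨ha, hc, hu, hv⟩ := abs_le_of_mem_fareyEnclosures hp
    exact ⟨hdet, ha₀, hc₀, abs_add_floor_mul_le hh ha₀ hu, ha, abs_add_floor_mul_le hh hc₀ hv, hc,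
      (div_add_div_mul_neg_iff hh.ne' ha₀ hc₀).2 hneg⟩
  · rintro ⟨hdet, ha₀, hc₀, -, -, -, -, hneg⟩
    exact (mem_fareyEnclosures_iff_mul_neg hh).2
      ⟨hdet, (div_add_div_mul_neg_iff hh.ne' ha₀ hc₀).1 hneg⟩

theorem sign_div_add_div (hp : (a, b, c, d) ∈ fareyEnclosures h k) :
    Real.sign ((k : ℝ) / h + b / a) = ((a * k + b * h) * (c * k + d * h)).sign := by
  have ha : (a : ℝ) ≠ 0 := Int.cast_ne_zero.2 (left_ne_zero_of_mul hp.2.1.ne')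
  have hh : (h : ℝ) ≠ 0 := Int.cast_ne_zero.2 (pos_of_mem_fareyEnclosures hp).ne'
  have hv : ((c * k + d * h : ℤ) : ℝ) ≠ 0 := Int.cast_ne_zero.2 (right_ne_zero_of_mul hp.2.1.ne')
  have hpos : (0 : ℝ) < (h * (a * (c * k + d * h)) : ℤ) :=
    Int.cast_pos.2 (mul_pos (pos_of_mem_fareyEnclosures hp) hp.2.1)
  have hdiv : (k : ℝ) / h + b / a =
      ((a * k + b * h) * (c * k + d * h) : ℤ) / (h * (a * (c * k + d * h)) : ℤ) := by
    rw [← mul_assoc, Int.cast_mul, Int.cast_mul (h * a), mul_div_mul_right _ _ hv]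
    push_cast
    field_simp
  rw [hdiv, ← Real.sign_intCast]
  simp only [Real.sign, div_lt_iff₀ hpos, lt_div_iff₀ hpos, zero_mul]

theorem Iwn_eq_fareySum (hh : 0 < h) :
    Iwn w n h k = 1 / 2 * fareySum (signedMonomial (w - n) n) h k := by
  rw [Iwn, fareySum]
  congr 1
  refine finsum_congr fun ⟨a, b, c, d⟩ ↦ ?_
  by_cases hp : (a, b, c, d) ∈ fareyEnclosures h k
  · rw [if_pos ((mem_fareyEnclosures_iff hh).1 hp), finsum_eq_if, if_pos hp, sign_div_add_div hp,
      signedMonomial, Complex.ofReal_intCast]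
  · rw [if_neg (mt (mem_fareyEnclosures_iff hh).2 hp), finsum_eq_if, if_neg hp]

theorem Iwn_add_self (hh : 0 < h) : Iwn w n h (k + h) = Iwn w n h k := by
  rw [Iwn_eq_fareySum hh, Iwn_eq_fareySum hh, fareySum_add_self]

theorem Iwn_mul_mul (hnw : n ≤ w) (hh : 0 < h) {t : ℤ} (ht : 0 < t) :
    Iwn w n (t * h) (t * k) = (t : ℂ) ^ w * Iwn w n h k := by
  rw [Iwn_eq_fareySum (mul_pos ht hh), Iwn_eq_fareySum hh, fareySum_mul_mul _ ht]
  simp only [signedMonomial_mul_mul ht, Nat.sub_add_cancel hnw, fareySum]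
  rw [← mul_finsum_mem, mul_left_comm]

theorem Iwn_neg (hm : Odd (w - n)) (hh : 0 < h) : Iwn w n h (-k) = Iwn w n h k := by
  rw [Iwn_eq_fareySum hh, Iwn_eq_fareySum hh, fareySum_neg (signedMonomial_neg_left hm)]

end Iwn

section Bernoulli

variable {h k : ℤ}

theorem bernoulli_eval_eq_add_sum_Ioc (m : ℕ) (x : ℚ) {n : ℤ} (hn : 0 ≤ n) :
    (Polynomial.bernoulli (m + 1)).eval x =
      (Polynomial.bernoulli (m + 1)).eval (x - n) +
        (m + 1) * ∑ j ∈ Finset.Ioc 0 n, (x - j) ^ m := by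
  induction n, hn using Int.leInduction with
  | base => simp
  | succ n hn ih =>
    have hstep := Polynomial.bernoulli_eval_one_add (m + 1) (x - (n + 1))
    rw [add_tsub_cancel_right, show 1 + (x - (n + 1)) = x - n by ring] at hstep
    rw [← Finset.insert_Ioc_right_eq_Ioc_add_one hn, Finset.sum_insert (by simp), ih]
    push_cast at hstep ⊢
    linear_combination hstep

theorem Bpoly_ratCast (m : ℕ) (x : ℚ) : Bpoly m x = ((Polynomial.bernoulli m).eval x : ℚ) :=
  Polynomial.aeval_algebraMap_apply_eq_algebraMap_eval x _

theorem Bpoly_sub_Bbar (m : ℕ) {x : ℚ} (hx : 0 ≤ x) :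
    Bpoly (m + 1) x - Bbar (m + 1) x = (m + 1) * ∑ j ∈ Finset.Ioc 0 ⌊x⌋, ((x : ℂ) - j) ^ m := by
  rw [Bpoly_ratCast, bernoulli_eval_eq_add_sum_Ioc m x (Int.floor_nonneg.2 hx), Bbar]
  push_cast
  ring

theorem Bbar_add_one (m : ℕ) (x : ℚ) : Bbar m (x + 1) = Bbar m x := by
  simp [Bbar]

theorem Bbar_neg (hm : Even m) (x : ℚ) : Bbar m (-x) = Bbar m x := by
  simp only [Bbar, Int.self_sub_floor]
  by_cases hx : Int.fract x = 0
  · rw [hx, Int.fract_neg_eq_zero.2 hx]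
  · rw [Int.fract_neg hx, Polynomial.bernoulli_eval_one_sub, hm.neg_one_pow, one_mul]

theorem sum_Ioc_pow_mul_pow (l m : ℕ) (hh : 0 < h) (hk : 0 ≤ k) :
    ∑ x ∈ Finset.Ioc 0 (k / h), (h : ℂ) ^ l * ((k - x * h : ℤ) : ℂ) ^ m =
      (Bpoly (m + 1) ((k : ℂ) / h) - Bbar (m + 1) ((k : ℚ) / h)) / (m + 1) * (h : ℂ) ^ (l + m) := by
  have hh₀ : (h : ℂ) ≠ 0 := Int.cast_ne_zero.2 hh.ne'
  have hm₀ : (m : ℂ) + 1 ≠ 0 := m.cast_add_one_ne_zero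
  have hfloor : ⌊(k : ℚ) / h⌋ = k / h := by
    lift h to ℕ using hh.le
    exact Rat.floor_intCast_div_natCast k h
  have hjump := Bpoly_sub_Bbar m (x := (k : ℚ) / h) (by positivity)
  push_cast at hjump
  rw [hjump, hfloor, mul_div_cancel_left₀ _ hm₀, Finset.sum_mul]
  refine Finset.sum_congr rfl fun x _ ↦ ?_
  rw [pow_add, mul_left_comm, ← mul_pow]
  push_cast
  rw [sub_mul, div_mul_cancel₀ _ hh₀]

end Bernoulli

section EwnOdd

variable {w n : ℕ} {h k : ℤ}

theorem sum_Ioc_signedMonomial_add (hm : Odd (w - n)) (hn : Odd n) (hh : 0 < h) (hk : 0 ≤ k) :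
    ∑ x ∈ Finset.Ioc 0 (k / h), (signedMonomial (w - n) n h (k - x * h) +
        signedMonomial (w - n) n (k - x * h) h) =
      (Bpoly (n + 1) ((k : ℂ) / h) - Bbar (n + 1) ((k : ℚ) / h)) / ((n : ℂ) + 1) * (h : ℂ) ^ w +
      (Bpoly (w - n + 1) ((k : ℂ) / h) - Bbar (w - n + 1) ((k : ℚ) / h)) /
        (((w - n : ℕ) : ℂ) + 1) * (h : ℂ) ^ w := by
  have hnw : n ≤ w := (Nat.sub_pos_iff_lt.1 hm.pos).le
  have hpow₁ := sum_Ioc_pow_mul_pow (w - n) n hh hk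
  have hpow₂ := sum_Ioc_pow_mul_pow n (w - n) hh hk
  rw [Nat.sub_add_cancel hnw] at hpow₁
  rw [Nat.add_sub_cancel' hnw] at hpow₂
  rw [← hpow₁, ← hpow₂, ← Finset.sum_add_distrib]
  refine Finset.sum_congr rfl fun x hx ↦ ?_
  have hx : 0 ≤ k - x * h :=
    sub_nonneg.2 ((Int.le_ediv_iff_mul_le hh).1 (Finset.mem_Ioc.1 hx).2)
  rw [signedMonomial_of_nonneg hm.pos.ne' hn.pos.ne' hh.le hx,
    signedMonomial_of_nonneg hm.pos.ne' hn.pos.ne' hx hh.le, mul_comm (_ ^ (w - n)) ((h : ℂ) ^ n)]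

theorem Iwn_sub_Iwn_swap (hm : Odd (w - n)) (hn : Odd n) (hh : 0 < h) (hk : 0 < k) :
    Iwn w n h k - Iwn w n k h =
      (Bpoly (n + 1) ((h : ℂ) / k) - Bbar (n + 1) ((h : ℚ) / k)) / ((n : ℂ) + 1) * (k : ℂ) ^ w +
      (Bpoly (w - n + 1) ((h : ℂ) / k) - Bbar (w - n + 1) ((h : ℚ) / k)) /
        (((w - n : ℕ) : ℂ) + 1) * (k : ℂ) ^ w -
      (Bpoly (n + 1) ((k : ℂ) / h) - Bbar (n + 1) ((k : ℚ) / h)) / ((n : ℂ) + 1) * (h : ℂ) ^ w -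
      (Bpoly (w - n + 1) ((k : ℂ) / h) - Bbar (w - n + 1) ((k : ℚ) / h)) /
        (((w - n : ℕ) : ℂ) + 1) * (h : ℂ) ^ w := by
  have hrec := fareySum_sub_fareySum_swap (signedMonomial_neg_left (n := n) hm)
    (signedMonomial_neg_right hn) (fun _ ↦ signedMonomial_zero_right)
    (fun _ ↦ signedMonomial_zero_left) hh hk
  rw [sum_Ioc_signedMonomial_add hm hn hk hh.le, sum_Ioc_signedMonomial_add hm hn hh hk.le,
    two_nsmul, two_nsmul] at hrec
  rw [Iwn_eq_fareySum hh, Iwn_eq_fareySum hk]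
  linear_combination 1 / 2 * hrec

theorem EwnOdd_add_self (hh : 0 < h) : EwnOdd w n h (k + h) = EwnOdd w n h k := by
  have hdiv : ((k + h : ℤ) : ℚ) / h = k / h + 1 := by
    rw [Int.cast_add, add_div, div_self (Int.cast_ne_zero.2 hh.ne')]
  simp only [EwnOdd, Iwn_add_self hh, hdiv, Bbar_add_one]

theorem EwnOdd_mul_mul (hnw : n ≤ w) (hh : 0 < h) {t : ℤ} (ht : 0 < t) :
    EwnOdd w n (t * h) (t * k) = (t : ℂ) ^ w * EwnOdd w n h k := by
  have hdiv : ((t * k : ℤ) : ℚ) / (t * h : ℤ) = k / h := by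
    rw [Int.cast_mul, Int.cast_mul, mul_div_mul_left _ _ (Int.cast_ne_zero.2 ht.ne')]
  rw [EwnOdd, EwnOdd, Iwn_mul_mul hnw hh ht, hdiv]
  push_cast
  ring

theorem EwnOdd_neg (hm : Odd (w - n)) (hn : Odd n) (hh : 0 < h) :
    EwnOdd w n h (-k) = EwnOdd w n h k := by
  simp only [EwnOdd, Iwn_neg hm hh, Int.cast_neg, neg_div, Bbar_neg hm.add_one, Bbar_neg hn.add_one]

theorem EwnOdd_sub_EwnOdd_swap (hm : Odd (w - n)) (hn : Odd n)
    (hh : 0 < h) (hk : 0 < k) : EwnOdd w n h k - EwnOdd w n k h = SwnOdd w n h k := by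
  rw [EwnOdd, EwnOdd, SwnOdd]
  linear_combination Iwn_sub_Iwn_swap hm hn hh hk

end EwnOdd

/-- For odd `n` with `0 < n < w`, `E_{w,n}` is an even weighted Dedekind symbol of
weight `w` with reciprocity law `E_{w,n}(h,k) − E_{w,n}(k,−h) = S_{w,n}(h,k)`. -/
theorem EwnOdd_isEvenDedekindSymbol (w n : ℕ) (hw : Even w) (hw0 : 0 < w)
    (hn : Odd n) (hn0 : 0 < n) (hnw : n < w) :
    (∀ h k : ℤ, 0 < h → EwnOdd w n h (k + h) = EwnOdd w n h k) ∧
    (∀ h k c : ℤ, 0 < h → 0 < c →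
      EwnOdd w n (c * h) (c * k) = (c : ℂ) ^ w * EwnOdd w n h k) ∧
    (∀ h k : ℤ, 0 < h → EwnOdd w n h (-k) = EwnOdd w n h k) ∧
    (∀ h k : ℤ, 0 < h → 0 < k →
      EwnOdd w n h k - EwnOdd w n k (-h) = SwnOdd w n h k) := by
  have hm : Odd (w - n) := Nat.Even.sub_odd hnw.le hw hn
  refine ⟨fun h k hh ↦ EwnOdd_add_self hh, fun h k c hh hc ↦ EwnOdd_mul_mul hnw.le hh hc,
    fun h k hh ↦ EwnOdd_neg hm hn hh, fun h k hh hk ↦ ?_⟩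
  rw [EwnOdd_neg hm hn hk, EwnOdd_sub_EwnOdd_swap hm hn hh hk]
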